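/- Let W, W̲, W̄ be k×m real matrices with W̲_{ij} ≤ W_{ij} ≤ W̄_{ij} for all entries, let b, b̲, b̄ ∈ ℝ^k with b̲_i ≤ b_i ≤ b̄_i for all i, and let z, z̲, z̄ ∈ ℝ^m with z̲_j ≤ z_j ≤ z̄_j for all j. Define l, u ∈ ℝ^k by l_i = b̲_i + Σ_j min{W̲_{ij}·z̲_j, W̲_{ij}·z̄_j, W̄_{ij}·z̲_j, W̄_{ij}·z̄_j} and u_i = b̄_i + Σ_j max{W̲_{ij}·z̲_j, W̲_{ij}·z̄_j, W̄_{ij}·z̲_j, W̄_{ij}·z̄_j}. Then for every i, max(l_i, 0) ≤ max((W z + b)_i, 0) ≤ max(u_i, 0); that is, the ReLU output of the actual layer lies componentwise inside the interval [ReLU(l), ReLU(u)] computed by the interval neural network. -/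

import Mathlib

theorem edge_bound (c a b x : ℝ) (h1 : a ≤ x) (h2 : x ≤ b) :
    min (c * a) (c * b) ≤ c * x ∧ c * x ≤ max (c * a) (c * b) := by
  rcases le_total 0 c with hc | hc
  · exact ⟨min_le_of_left_le (mul_le_mul_of_nonneg_left h1 hc),
      le_max_of_le_right (mul_le_mul_of_nonneg_left h2 hc)⟩
  · exact ⟨min_le_of_right_le (mul_le_mul_of_nonpos_left h2 hc),
      le_max_of_le_left (mul_le_mul_of_nonpos_left h1 hc)⟩

theorem corner_bound (w wl wu x a b : ℝ) (hw1 : wl ≤ w) (hw2 : w ≤ wu)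
    (h1 : a ≤ x) (h2 : x ≤ b) :
    min (min (wl * a) (wl * b)) (min (wu * a) (wu * b)) ≤ w * x ∧
      w * x ≤ max (max (wl * a) (wl * b)) (max (wu * a) (wu * b)) := by
  obtain ⟨p1, p2⟩ := edge_bound wl a b x h1 h2
  obtain ⟨q1, q2⟩ := edge_bound wu a b x h1 h2
  obtain ⟨r1, r2⟩ := edge_bound x wl wu w hw1 hw2
  rw [mul_comm x wl, mul_comm x wu, mul_comm x w] at r1 r2
  exact ⟨(min_le_min p1 q1).trans r1, r2.trans (max_le_max p2 q2)⟩

/-- Soundness of one ReLU layer of an interval neural network: if the true weights,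
biases, and activations lie componentwise within their intervals, then the true layer
output `ReLU(Wz + b)` lies componentwise within `[ReLU(l), ReLU(u)]`, where `l` and
`u` are the interval-arithmetic lower and upper bounds. -/
theorem stmt7 {k m : ℕ}
    (W Wl Wu : Matrix (Fin k) (Fin m) ℝ)
    (hWl : ∀ i j, Wl i j ≤ W i j) (hWu : ∀ i j, W i j ≤ Wu i j)
    (b bl bu : Fin k → ℝ)
    (hbl : ∀ i, bl i ≤ b i) (hbu : ∀ i, b i ≤ bu i)
    (z zl zu : Fin m → ℝ)
    (hzl : ∀ j, zl j ≤ z j) (hzu : ∀ j, z j ≤ zu j)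
    (l u : Fin k → ℝ)
    (hl : ∀ i, l i = bl i + ∑ j, min (min (Wl i j * zl j) (Wl i j * zu j))
                                      (min (Wu i j * zl j) (Wu i j * zu j)))
    (hu : ∀ i, u i = bu i + ∑ j, max (max (Wl i j * zl j) (Wl i j * zu j))
                                      (max (Wu i j * zl j) (Wu i j * zu j))) :
    ∀ i, max (l i) 0 ≤ max (W.mulVec z i + b i) 0 ∧
         max (W.mulVec z i + b i) 0 ≤ max (u i) 0 := by
  intro i
  rw [hl, hu]
  have hs : W.mulVec z i = ∑ j, W i j * z j := rfl
  rw [hs]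
  have hc := fun j => corner_bound _ _ _ _ _ _ (hWl i j) (hWu i j) (hzl j) (hzu j)
  have h1 := Finset.sum_le_sum (s := Finset.univ) fun j _ => (hc j).1
  have h2 := Finset.sum_le_sum (s := Finset.univ) fun j _ => (hc j).2
  have h3 := hbl i
  have h4 := hbu i
  exact ⟨max_le_max (by linarith) le_rfl, max_le_max (by linarith) le_rfl⟩
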